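/- For every real number z, one has z·Φ(z) + φ(z) > 0, where φ(z) = (1/√(2π)) e^{−z²/2} is the standard normal probability density function and Φ(z) = ∫_{−∞}^{z} φ(t) dt is the standard normal cumulative distribution function. Consequently, for σ > 0 the closed-form Expected Improvement (μ − a)·Φ((μ − a)/σ) + σ·φ((μ − a)/σ) is strictly positive for all μ, a ∈ ℝ. -/

import Mathlib

open MeasureTheory Set

/-- The standard normal probability density function φ. -/
noncomputable def stdNormalPDF (z : ℝ) : ℝ :=
  (1 / Real.sqrt (2 * Real.pi)) * Real.exp (-z ^ 2 / 2)

/-- The standard normal cumulative distribution function Φ. -/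
noncomputable def stdNormalCDF (z : ℝ) : ℝ :=
  ∫ t in Iic z, stdNormalPDF t

lemma stdNormalPDF_pos (z : ℝ) : 0 < stdNormalPDF z := by
  unfold stdNormalPDF
  positivity

lemma hasDerivAt_stdNormalPDF (z : ℝ) :
    HasDerivAt stdNormalPDF (-(z * stdNormalPDF z)) z := by
  unfold stdNormalPDF
  have h : HasDerivAt (fun x : ℝ => -x ^ 2 / 2) (-z) z := by
    refine ((hasDerivAt_pow 2 z).fun_neg.div_const 2).congr_deriv ?_
    norm_num [neg_div]
  refine (h.exp.const_mul (1 / Real.sqrt (2 * Real.pi))).congr_deriv ?_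
  ring

lemma integrable_stdNormalPDF : Integrable stdNormalPDF := by
  convert (integrable_exp_neg_mul_sq (b := 1 / 2) (by norm_num)).const_mul
    (1 / Real.sqrt (2 * Real.pi)) using 1
  ext z
  rw [stdNormalPDF]
  ring_nf

lemma integrable_mul_stdNormalPDF : Integrable fun z => z * stdNormalPDF z := by
  convert (integrable_mul_exp_neg_mul_sq (b := 1 / 2) (by norm_num)).const_mul
    (1 / Real.sqrt (2 * Real.pi)) using 1
  ext z
  rw [stdNormalPDF]
  ring_nf

lemma integral_Iic_neg_mul_stdNormalPDF (z : ℝ) :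
    ∫ t in Iic z, -(t * stdNormalPDF t) = stdNormalPDF z := by
  have hderiv : IntegrableOn (fun t => -(t * stdNormalPDF t)) (Iic z) :=
    integrable_mul_stdNormalPDF.neg.integrableOn
  have hlim : Filter.Tendsto stdNormalPDF Filter.atBot (nhds 0) :=
    tendsto_zero_of_hasDerivAt_of_integrableOn_Iic (a := z)
      (fun t _ => hasDerivAt_stdNormalPDF t) hderiv integrable_stdNormalPDF.integrableOn
  rw [integral_Iic_of_hasDerivAt_of_tendsto' (fun t _ => hasDerivAt_stdNormalPDF t) hderiv hlim,
    sub_zero]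

lemma mul_stdNormalCDF_add_stdNormalPDF (z : ℝ) :
    z * stdNormalCDF z + stdNormalPDF z = ∫ t in Iic z, (z - t) * stdNormalPDF t := by
  rw [← integral_Iic_neg_mul_stdNormalPDF z, stdNormalCDF, ← integral_const_mul,
    ← integral_add (integrable_stdNormalPDF.const_mul z).integrableOn
      integrable_mul_stdNormalPDF.fun_neg.integrableOn]
  congr 1 with t
  ring

lemma mul_stdNormalCDF_add_stdNormalPDF_pos (z : ℝ) :
    0 < z * stdNormalCDF z + stdNormalPDF z := by
  have hint : IntegrableOn (fun t => (z - t) * stdNormalPDF t) (Iio z) := by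
    convert ((integrable_stdNormalPDF.const_mul z).sub integrable_mul_stdNormalPDF).integrableOn
      using 1
    ext t
    simp [sub_mul]
  have hpos : ∀ t ∈ Iio z, 0 < (z - t) * stdNormalPDF t := fun t ht =>
    mul_pos (sub_pos.mpr ht) (stdNormalPDF_pos t)
  have hsupp : Iio z ⊆ Function.support fun t => (z - t) * stdNormalPDF t := fun t ht =>
    (hpos t ht).ne'
  rw [mul_stdNormalCDF_add_stdNormalPDF, integral_Iic_eq_integral_Iio,
    setIntegral_pos_iff_support_of_nonneg_ae
      ((ae_restrict_mem measurableSet_Iio).mono fun t ht => (hpos t ht).le) hint,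
    inter_eq_right.mpr hsupp]
  simp

/-- For every real `z`, `z·Φ(z) + φ(z) > 0`; consequently, for `σ > 0` the
closed-form Expected Improvement `(μ − a)·Φ((μ − a)/σ) + σ·φ((μ − a)/σ)` is
strictly positive for all `μ, a`. -/
theorem expectedImprovement_pos :
    (∀ z : ℝ, 0 < z * stdNormalCDF z + stdNormalPDF z) ∧
    (∀ μ a σ : ℝ, 0 < σ →
      0 < (μ - a) * stdNormalCDF ((μ - a) / σ) + σ * stdNormalPDF ((μ - a) / σ)) := by
  refine ⟨mul_stdNormalCDF_add_stdNormalPDF_pos, fun μ a σ hσ => ?_⟩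
  have h := mul_pos hσ (mul_stdNormalCDF_add_stdNormalPDF_pos ((μ - a) / σ))
  rwa [mul_add, ← mul_assoc, mul_div_cancel₀ _ hσ.ne'] at h
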